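/- Fix an integer P ≥ 1 and positive reals μ₁, …, μ_P. For each real t > 0 let Y₁(t), …, Y_{2P}(t) be independent random variables with Y_{2i−1}(t) and Y_{2i}(t) each distributed as Poisson(μ_i t), and define R(t) = 2[ ∑_{i=1}^P Y_{2i−1}(t) log( 2Y_{2i−1}(t) / (Y_{2i−1}(t)+Y_{2i}(t)) ) + ∑_{i=1}^P Y_{2i}(t) log( 2Y_{2i}(t) / (Y_{2i−1}(t)+Y_{2i}(t)) ) ], with the conventions 0·log 0 = 0 and that a pair with Y_{2i−1}(t)+Y_{2i}(t) = 0 contributes 0. Then, as t → ∞, the law of R(t) converges weakly (in distribution) to the chi-squared distribution with P degrees of freedom. (This is the asymptotic null distribution of the likelihood ratio statistic for pairwise equality of Poisson means; t plays the role of the number of realizations M, so the result holds even for a single realization M = 1 as the means grow.) -/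

import Mathlib

open MeasureTheory ProbabilityTheory Filter

/-- The index `2i` (0-based) of the `i`-th pair among `2P` components. -/
def pairL (P : ℕ) (i : Fin P) : Fin (2 * P) := ⟨2 * i.1, by have := i.isLt; omega⟩

/-- The index `2i+1` (0-based) of the `i`-th pair among `2P` components. -/
def pairR (P : ℕ) (i : Fin P) : Fin (2 * P) := ⟨2 * i.1 + 1, by have := i.isLt; omega⟩

/-- The pair index `⌊j/2⌋` of a component `j` among `2P` components. -/
def pairIdx (P : ℕ) (j : Fin (2 * P)) : Fin P := ⟨j.1 / 2, by have := j.isLt; omega⟩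


lemma lrt_hasSum_mean (r : NNReal) :
    HasSum (fun n : ℕ => Real.exp (-r) * r ^ n / n.factorial * (n : ℝ)) r := by
  have h := (hasSum_one_poissonMeasure r).mul_left (r : ℝ)
  rw [mul_one] at h
  rw [← hasSum_nat_add_iff' 1]
  simp only [Finset.sum_range_one, Nat.cast_zero, mul_zero, sub_zero]
  refine h.congr_fun ?_ |> fun h => h
  intro n
  rw [Nat.factorial_succ]
  push_cast
  have : (n.factorial : ℝ) ≠ 0 := by positivity
  field_simp
  ring

lemma lrt_hasSum_sq (r : NNReal) :
    HasSum (fun n : ℕ => Real.exp (-r) * r ^ n / n.factorial * (n : ℝ) ^ 2) (r * (r + 1)) := by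
  have h := ((lrt_hasSum_mean r).add (hasSum_one_poissonMeasure r)).mul_left (r : ℝ)
  rw [← hasSum_nat_add_iff' 1]
  simp only [Finset.sum_range_one, Nat.cast_zero, mul_zero, sub_zero, ne_eq, OfNat.ofNat_ne_zero,
    not_false_eq_true, zero_pow]
  refine h.congr_fun ?_ |> fun h => h
  intro n
  rw [Nat.factorial_succ]
  push_cast
  have : (n.factorial : ℝ) ≠ 0 := by positivity
  field_simp
  ring

lemma lrt_hasSum_var (r : NNReal) :
    HasSum (fun n : ℕ => Real.exp (-r) * r ^ n / n.factorial * ((n : ℝ) - r) ^ 2) r := by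
  have h := ((lrt_hasSum_sq r).add ((lrt_hasSum_mean r).mul_left (-2 * (r : ℝ)))).add
    ((hasSum_one_poissonMeasure r).mul_left ((r : ℝ) ^ 2))
  convert h using 1
  · ext n; ring
  · ring

lemma lrt_integrable_var (r : NNReal) :
    Integrable (fun n : ℕ => ((n : ℝ) - r) ^ 2) (poissonMeasure r) := by
  rw [integrable_poissonMeasure_iff]
  refine (lrt_hasSum_var r).summable.congr fun n => ?_
  rw [Real.norm_of_nonneg (sq_nonneg _)]

lemma lrt_integral_var (r : NNReal) :
    ∫ n : ℕ, ((n : ℝ) - r) ^ 2 ∂(poissonMeasure r) = r := by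
  rw [integral_poissonMeasure]
  simpa only [smul_eq_mul] using (lrt_hasSum_var r).tsum_eq

/-- Taylor bound. -/
lemma lrt_h_bound (u : ℝ) (hu : |u| ≤ 1 / 2) :
    |(1 + u) * Real.log (1 + u) + (1 - u) * Real.log (1 - u) - u ^ 2| ≤ 5 * u ^ 4 := by
  have h1 := Real.abs_log_sub_add_sum_range_le (x := u) (by linarith) 3
  have h2 := Real.abs_log_sub_add_sum_range_le (x := -u) (by rw [abs_neg]; linarith) 3
  simp only [Finset.sum_range_succ, Finset.sum_range_zero, abs_neg, sub_neg_eq_add] at h1 h2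
  norm_num at h1 h2
  have hu4 : |u| ^ 4 = u ^ 4 := by rw [← abs_pow]; exact abs_of_nonneg (by positivity)
  have h3 : |u| ^ 4 / (1 - |u|) ≤ 2 * u ^ 4 := by
    rw [hu4, div_le_iff₀ (by linarith)]
    have : 0 ≤ u ^ 4 := by positivity
    nlinarith
  have h1 := abs_le.1 (h1.trans h3)
  have h2 := abs_le.1 (h2.trans h3)
  obtain ⟨ha, hb⟩ := abs_le.1 hu
  set A := Real.log (1 + u)
  set B := Real.log (1 - u)
  have e1 : 0 ≤ 1 + u := by linarith
  have e2 : 0 ≤ 1 - u := by linarith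
  have a1 := mul_le_mul_of_nonneg_left h1.1 e2
  have a2 := mul_le_mul_of_nonneg_left h1.2 e2
  have b1 := mul_le_mul_of_nonneg_left h2.1 e1
  have b2 := mul_le_mul_of_nonneg_left h2.2 e1
  have : 0 ≤ u ^ 4 := by positivity
  rw [abs_le]
  constructor <;> nlinarith

noncomputable def lrtG (p : ℕ × ℕ) : ℝ :=
  2 * (if p.1 + p.2 = 0 then 0
         else
          (p.1 : ℝ) * Real.log (2 * (p.1 : ℝ) / ((p.1 : ℝ) + (p.2 : ℝ))) +
            (p.2 : ℝ) * Real.log (2 * (p.2 : ℝ) / ((p.1 : ℝ) + (p.2 : ℝ))))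

lemma lrtG_bound (p : ℕ × ℕ) (r a : ℝ) (hr : 0 < r) (ha : a ≤ r / 4)
    (h1 : |(p.1 : ℝ) - r| ≤ a) (h2 : |(p.2 : ℝ) - r| ≤ a) :
    |lrtG p - ((p.1 : ℝ) - p.2) ^ 2 / (2 * r)| ≤ 80 * a ^ 4 / r ^ 3 + 4 * a ^ 3 / r ^ 2 := by
  have ha0 : 0 ≤ a := (abs_nonneg _).trans h1
  rw [abs_le] at h1 h2
  have hS0 : p.1 + p.2 ≠ 0 := by
    intro h
    have : ((p.1 + p.2 : ℕ) : ℝ) = 0 := by rw [h]; simp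
    push_cast at this
    linarith [h1.1, h2.1]
  unfold lrtG
  rw [if_neg hS0]
  set x := (p.1 : ℝ)
  set y := (p.2 : ℝ)
  set S := x + y with hS
  set D := x - y with hD
  have hSr : r ≤ S := by linarith
  have hSp : 0 < S := by linarith
  have hDa : |D| ≤ 2 * a := by rw [abs_le]; constructor <;> linarith
  have hTa : |2 * r - S| ≤ 2 * a := by rw [abs_le]; constructor <;> linarith
  set u := D / S with hu
  have huS : S * u = D := by rw [hu]; field_simp
  have hu2 : |u| ≤ 1 / 2 := by
    rw [hu, abs_div, abs_of_pos hSp, div_le_iff₀ hSp]; linarith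
  have hx : 2 * x / S = 1 + u := by rw [hu]; field_simp; rw [hS, hD]; ring
  have hy : 2 * y / S = 1 - u := by rw [hu]; field_simp; rw [hS, hD]; ring
  have hx' : x = S * (1 + u) / 2 := by rw [mul_add, huS]; rw [hS, hD]; ring
  have hy' : y = S * (1 - u) / 2 := by rw [mul_sub, huS]; rw [hS, hD]; ring
  rw [hx, hy]
  have key := lrt_h_bound u hu2
  have e : 2 * (x * Real.log (1 + u) + y * Real.log (1 - u)) - D ^ 2 / (2 * r)
      = S * ((1 + u) * Real.log (1 + u) + (1 - u) * Real.log (1 - u) - u ^ 2)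
        + D ^ 2 * (2 * r - S) / (2 * r * S) := by
    have : S * u ^ 2 = D ^ 2 / S := by rw [hu]; field_simp
    rw [mul_sub, this]
    nth_rw 1 [hx', hy']
    field_simp
    ring
  rw [e]
  refine (abs_add_le _ _).trans (add_le_add ?_ ?_)
  · rw [abs_mul, abs_of_pos hSp]
    calc S * _ ≤ S * (5 * u ^ 4) := by gcongr
      _ = 5 * |D| ^ 4 / S ^ 3 := by
        rw [← abs_pow, abs_of_nonneg (by positivity : 0 ≤ D ^ 4), hu]; field_simp
      _ ≤ 5 * (2 * a) ^ 4 / r ^ 3 := by gcongr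
      _ = _ := by ring
  · rw [abs_div, abs_mul, abs_pow, abs_of_pos (by positivity : 0 < 2 * r * S)]
    calc |D| ^ 2 * |2 * r - S| / (2 * r * S) ≤ (2 * a) ^ 2 * (2 * a) / (2 * r * r) := by gcongr
      _ = _ := by field_simp; ring

lemma lrt_cexp_sub (x y : ℝ) : ‖Complex.exp (x * Complex.I) - Complex.exp (y * Complex.I)‖ ≤ |x - y| := by
  have : Complex.exp (x * Complex.I) - Complex.exp (y * Complex.I)
      = Complex.exp (y * Complex.I) * (Complex.exp (Complex.I * ((x - y : ℝ) : ℂ)) - 1) := by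
    rw [mul_sub, ← Complex.exp_add, mul_one]
    congr 2
    push_cast; ring
  rw [this, norm_mul, Complex.norm_exp_ofReal_mul_I, one_mul]
  exact Real.norm_exp_I_mul_ofReal_sub_one_le

lemma lrt_pointwise (θ : ℝ) (p : ℕ × ℕ) (r a : ℝ) (hr : 0 < r) (ha0 : 0 < a) (ha : a ≤ r / 4) :
    ‖Complex.exp ((θ * lrtG p : ℝ) * Complex.I)
      - Complex.exp ((θ * (((p.1 : ℝ) - p.2) ^ 2 / (2 * r)) : ℝ) * Complex.I)‖
    ≤ |θ| * (80 * a ^ 4 / r ^ 3 + 4 * a ^ 3 / r ^ 2)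
      + 2 / a ^ 2 * (((p.1 : ℝ) - r) ^ 2 + ((p.2 : ℝ) - r) ^ 2) := by
  by_cases h : |(p.1 : ℝ) - r| ≤ a ∧ |(p.2 : ℝ) - r| ≤ a
  · refine (lrt_cexp_sub _ _).trans ?_
    rw [← mul_sub, abs_mul]
    refine (mul_le_mul_of_nonneg_left (lrtG_bound p r a hr ha h.1 h.2) (abs_nonneg _)).trans ?_
    have : 0 ≤ 2 / a ^ 2 * (((p.1 : ℝ) - r) ^ 2 + ((p.2 : ℝ) - r) ^ 2) := by positivity
    linarith
  · have h2 : a ^ 2 ≤ ((p.1 : ℝ) - r) ^ 2 + ((p.2 : ℝ) - r) ^ 2 := by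
      rw [not_and_or] at h
      push Not at h
      rcases h with h | h
      · have := pow_le_pow_left₀ ha0.le h.le 2
        rw [sq_abs] at this
        nlinarith [sq_nonneg ((p.2 : ℝ) - r)]
      · have := pow_le_pow_left₀ ha0.le h.le 2
        rw [sq_abs] at this
        nlinarith [sq_nonneg ((p.1 : ℝ) - r)]
    have h3 : 2 ≤ 2 / a ^ 2 * (((p.1 : ℝ) - r) ^ 2 + ((p.2 : ℝ) - r) ^ 2) := by
      rw [div_mul_eq_mul_div, le_div_iff₀ (by positivity)]
      linarith
    have h4 : 0 ≤ |θ| * (80 * a ^ 4 / r ^ 3 + 4 * a ^ 3 / r ^ 2) := by positivity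
    refine (norm_sub_le _ _).trans ?_
    rw [Complex.norm_exp_ofReal_mul_I, Complex.norm_exp_ofReal_mul_I]
    linarith

/-- gamma complex mgf -/
lemma lrt_complexMGF_gamma (a : ℝ) (ha : 0 < a) :
    Set.EqOn (complexMGF id (gammaMeasure a (1 / 2))) (fun z => (1 - 2 * z) ^ (-(a : ℂ)))
      {z : ℂ | z.re < 1 / 2} := by
  have hmeas : gammaMeasure a (1 / 2) =
      volume.withDensity (fun x => ENNReal.ofReal (gammaPDFReal a (1 / 2) x)) := rfl
  have hpdf0 := gammaPDFReal_nonneg (a := a) (r := 1 / 2) ha (by norm_num)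
  have hbase : ∀ s : ℝ, s < 1 / 2 →
      Integrable (fun x => gammaPDFReal a (1 / 2) x * Real.exp (s * x)) ∧
      ∫ x, gammaPDFReal a (1 / 2) x * Real.exp (s * x) = (1 - 2 * s) ^ (-a) := by
    intro s hs
    have e : (fun x => gammaPDFReal a (1 / 2) x * Real.exp (s * x))
        =ᵐ[volume] (Set.Ioi (0 : ℝ)).indicator
          (fun x => (1 / 2) ^ a / Real.Gamma a * (x ^ (a - 1) * Real.exp (-((1 / 2 - s) * x)))) := by
      have h0 : ∀ᵐ x : ℝ, x ≠ 0 := by simp [ae_iff, measure_singleton]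
      filter_upwards [h0] with x hx
      by_cases hx0 : 0 < x
      · rw [Set.indicator_of_mem (by exact hx0), gammaPDFReal, if_pos hx0.le]
        have : Real.exp (-((1 / 2 - s) * x)) = Real.exp (-(1 / 2 * x)) * Real.exp (s * x) := by
          rw [← Real.exp_add]; congr 1; ring
        rw [this]; ring
      · rw [Set.indicator_of_notMem (by exact hx0), gammaPDFReal, if_neg, zero_mul]
        intro h; exact hx0 (lt_of_le_of_ne h hx.symm)
    have hI := Real.integral_rpow_mul_exp_neg_mul_Ioi ha (r := 1 / 2 - s) (by linarith)
    have hG : 0 < Real.Gamma a := Real.Gamma_pos_of_pos ha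
    have hpos : 0 < 1 / 2 - s := by linarith
    constructor
    · rw [integrable_congr e, integrable_indicator_iff measurableSet_Ioi]
      apply Integrable.const_mul
      by_contra hn
      rw [integral_undef hn] at hI
      have : 0 < (1 / (1 / 2 - s)) ^ a * Real.Gamma a := by positivity
      linarith
    · rw [integral_congr_ae e, integral_indicator measurableSet_Ioi, integral_const_mul, hI]
      rw [Real.rpow_neg (by linarith), ← Real.inv_rpow (by linarith)]
      have : (1 - 2 * s)⁻¹ = (1 / 2) * (1 / (1 / 2 - s)) := by
        rw [← mul_div_assoc, mul_one, eq_div_iff hpos.ne', inv_mul_eq_div, div_eq_iff]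
        · ring
        · linarith
      rw [this, Real.mul_rpow (by positivity) (by positivity)]
      field_simp
  have hint : ∀ s : ℝ, s < 1 / 2 →
      Integrable (fun x => Real.exp (s * x)) (gammaMeasure a (1 / 2)) := by
    intro s hs
    rw [hmeas, integrable_withDensity_iff_integrable_smul₀'
      (measurable_gammaPDFReal _ _).ennreal_ofReal.aemeasurable (by simp)]
    refine (hbase s hs).1.congr (ae_of_all _ fun x => ?_)
    simp only [smul_eq_mul]
    rw [ENNReal.toReal_ofReal (hpdf0 x)]
  have hmgf : ∀ s : ℝ, s < 1 / 2 → mgf id (gammaMeasure a (1 / 2)) s = (1 - 2 * s) ^ (-a) := by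
    intro s hs
    rw [mgf, hmeas, integral_withDensity_eq_integral_toReal_smul
      (measurable_gammaPDFReal _ _).ennreal_ofReal (by simp), ← (hbase s hs).2]
    congr 1
    ext x
    simp only [smul_eq_mul, id]
    rw [ENNReal.toReal_ofReal (hpdf0 x)]
  have hsub : Set.Iio (1 / 2 : ℝ) ⊆ interior (integrableExpSet id (gammaMeasure a (1 / 2))) := by
    rw [isOpen_Iio.subset_interior_iff]
    intro s hs
    exact hint s hs
  have han : AnalyticOnNhd ℂ (complexMGF id (gammaMeasure a (1 / 2))) {z : ℂ | z.re < 1 / 2} :=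
    fun z hz => analyticAt_complexMGF (hsub hz)
  have hopen : IsOpen {z : ℂ | z.re < 1 / 2} := isOpen_lt Complex.continuous_re continuous_const
  have han2 : AnalyticOnNhd ℂ (fun z : ℂ => (1 - 2 * z) ^ (-(a : ℂ))) {z : ℂ | z.re < 1 / 2} := by
    intro z hz
    have : 1 - 2 * z ∈ Complex.slitPlane := by
      left
      simp at hz ⊢
      linarith
    have h1 : AnalyticAt ℂ (fun z : ℂ => 1 - 2 * z) z := by fun_prop
    exact h1.cpow analyticAt_const this
  refine han.eqOn_of_preconnected_of_frequently_eq han2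
    (convex_halfSpace_re_lt _).isPreconnected (z₀ := 0) (by simp) ?_
  have ht : Tendsto (fun x : ℝ => (x : ℂ)) (nhdsWithin 0 {0}ᶜ) (nhdsWithin 0 {0}ᶜ) := by
    refine tendsto_nhdsWithin_iff.2 ⟨?_, ?_⟩
    · exact (Complex.continuous_ofReal.tendsto' 0 0 (by simp)).mono_left nhdsWithin_le_nhds
    · filter_upwards [self_mem_nhdsWithin] with x hx
      simpa using hx
  refine ht.frequently (Eventually.frequently ?_)
  have : ∀ᶠ x : ℝ in nhdsWithin 0 {0}ᶜ, x < 1 / 2 :=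
    nhdsWithin_le_nhds (Iio_mem_nhds (by norm_num))
  filter_upwards [this] with x hx
  rw [complexMGF_ofReal, hmgf x hx, Complex.ofReal_cpow (by linarith)]
  push_cast
  rfl

lemma lrt_charFun_gamma (a : ℝ) (ha : 0 < a) (θ : ℝ) :
    charFun (gammaMeasure a (1 / 2)) θ = (1 - 2 * (θ * Complex.I)) ^ (-(a : ℂ)) := by
  rw [← complexMGF_id_mul_I]
  exact lrt_complexMGF_gamma a ha (by simp)

lemma lrt_gauss_sq (θ : ℝ) :
    ∫ x, Complex.exp ((θ * x ^ 2 : ℝ) * Complex.I) ∂(gaussianReal 0 1)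
      = (1 - 2 * (θ * Complex.I)) ^ (-(1 / 2 : ℂ)) := by
  rw [integral_gaussianReal_eq_integral_smul (by norm_num)]
  have hb : 0 < (1 / 2 - θ * Complex.I : ℂ).re := by simp
  have e : ∀ x : ℝ, gaussianPDFReal 0 1 x • Complex.exp ((θ * x ^ 2 : ℝ) * Complex.I)
      = ((Real.sqrt (2 * Real.pi))⁻¹ : ℝ) * Complex.exp (-(1 / 2 - θ * Complex.I) * (x : ℂ) ^ 2) := by
    intro x
    rw [gaussianPDFReal, Complex.real_smul]
    push_cast
    simp only [mul_one, sub_zero]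
    rw [mul_assoc, ← Complex.exp_add]
    congr 2
    ring
  simp_rw [e]
  rw [integral_const_mul, integral_gaussian_complex hb]
  have hw : (1 - 2 * (θ * Complex.I) : ℂ) ≠ 0 := by
    intro h
    have := congrArg Complex.re h
    simp at this
  have hsl : (1 - 2 * (θ * Complex.I) : ℂ) ∈ Complex.slitPlane := by left; simp
  have e2 : (Real.pi / (1 / 2 - θ * Complex.I) : ℂ)
      = ((2 * Real.pi : ℝ) : ℂ) * (1 - 2 * (θ * Complex.I))⁻¹ := by
    have : (1 / 2 - θ * Complex.I : ℂ) = (1 - 2 * (θ * Complex.I)) / 2 := by ring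
    rw [this]; field_simp; push_cast; ring
  rw [e2, Complex.cpow_def_of_ne_zero (mul_ne_zero (by
      rw [Complex.ofReal_ne_zero]; positivity) (inv_ne_zero hw)),
    Complex.log_ofReal_mul (by positivity) (inv_ne_zero hw),
    Complex.log_inv _ (Complex.slitPlane_arg_ne_pi hsl), Complex.cpow_def_of_ne_zero hw, add_mul,
    Complex.exp_add]
  have e3 : Complex.exp ((Real.log (2 * Real.pi) : ℝ) * (1 / 2)) = (Real.sqrt (2 * Real.pi) : ℝ) := by
    rw [Real.sqrt_eq_rpow, Real.rpow_def_of_pos (by positivity)]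
    push_cast
    rfl
  rw [e3, ← mul_assoc, ← Complex.ofReal_mul, inv_mul_cancel₀ (by positivity)]
  simp

lemma lrt_cos_limit (x : ℝ) :
    Tendsto (fun m : ℝ => m * (Real.cos ((Real.sqrt m)⁻¹ * x) - 1)) atTop (nhds (-(x ^ 2) / 2)) := by
  rw [tendsto_iff_norm_sub_tendsto_zero]
  have h0 : Tendsto (fun m : ℝ => x ^ 4 / m) atTop (nhds 0) := tendsto_const_nhds.div_atTop tendsto_id
  refine squeeze_zero' (Eventually.of_forall fun _ => norm_nonneg _) ?_ h0
  filter_upwards [eventually_gt_atTop 0, eventually_ge_atTop (x ^ 2)] with m hm hm2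
  have hs : Real.sqrt m ^ 2 = m := Real.sq_sqrt hm.le
  have hsp : 0 < Real.sqrt m := Real.sqrt_pos.2 hm
  set s := (Real.sqrt m)⁻¹ * x with hsdef
  have hs2 : m * s ^ 2 = x ^ 2 := by
    rw [hsdef, mul_pow, inv_pow, hs]; field_simp
  have hs1 : |s| ≤ 1 := by
    rw [← sq_le_one_iff_abs_le_one]
    by_contra h
    push Not at h
    nlinarith
  have hb := Real.cos_bound hs1
  have e : m * (Real.cos s - 1) - -(x ^ 2) / 2 = m * (Real.cos s - (1 - s ^ 2 / 2)) := by
    rw [← hs2]; ring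
  rw [e, norm_mul, Real.norm_of_nonneg hm.le, Real.norm_eq_abs]
  have hs4 : |s| ^ 4 = s ^ 4 := by rw [← abs_pow]; exact abs_of_nonneg (by positivity)
  have : m * s ^ 4 = x ^ 4 / m := by
    rw [eq_div_iff hm.ne']
    calc m * s ^ 4 * m = (m * s ^ 2) ^ 2 := by ring
      _ = _ := by rw [hs2]; ring
  rw [← this]
  refine mul_le_mul_of_nonneg_left (hb.trans ?_) hm.le
  rw [hs4]
  have : 0 ≤ s ^ 4 := by positivity
  linarith

noncomputable def lrtX (r : NNReal) (p : ℕ × ℕ) : ℝ :=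
  (Real.sqrt (2 * r))⁻¹ * ((p.1 : ℝ) - p.2)

lemma lrt_charFun_X (r : NNReal) (x : ℝ) :
    charFun (((poissonMeasure r).prod (poissonMeasure r)).map (lrtX r)) x
      = ((Real.exp (2 * r * (Real.cos ((Real.sqrt (2 * r))⁻¹ * x) - 1)) : ℝ) : ℂ) := by
  set s := (Real.sqrt (2 * r))⁻¹ * x with hs
  have hc := charFun_map_cast_poissonMeasure r
  simp_rw [charFun_apply_real] at hc ⊢
  have hc' : ∀ t : ℝ, ∫ n : ℕ, Complex.exp (t * (n : ℝ) * Complex.I) ∂(poissonMeasure r)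
      = Complex.exp (r * (Complex.exp (t * Complex.I) - 1)) := by
    intro t
    rw [← hc t, integral_map .of_discrete (by fun_prop)]
  rw [integral_map .of_discrete (by fun_prop)]
  have e : ∀ p : ℕ × ℕ, Complex.exp (x * (lrtX r p : ℝ) * Complex.I)
      = Complex.exp ((s : ℝ) * (p.1 : ℝ) * Complex.I)
        * Complex.exp ((-s : ℝ) * (p.2 : ℝ) * Complex.I) := by
    intro p
    rw [← Complex.exp_add, lrtX, hs]
    congr 1
    push_cast
    ring
  simp_rw [e]
  rw [integral_prod_mul (f := fun n : ℕ => Complex.exp ((s : ℝ) * (n : ℝ) * Complex.I))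
    (g := fun n : ℕ => Complex.exp ((-s : ℝ) * (n : ℝ) * Complex.I)), hc', hc', ← Complex.exp_add,
    Complex.ofReal_exp]
  congr 1
  push_cast
  rw [Complex.cos]
  ring

instance lrt_prob (r : NNReal) : IsProbabilityMeasure
    (((poissonMeasure r).prod (poissonMeasure r)).map (lrtX r)) :=
  Measure.isProbabilityMeasure_map .of_discrete

lemma lrt_tendsto_X (r : ℕ → NNReal) (hr : Tendsto r atTop atTop) (θ : ℝ) :
    Tendsto (fun n => ∫ p, Complex.exp ((θ * (((p.1 : ℝ) - p.2) ^ 2 / (2 * r n)) : ℝ) * Complex.I)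
        ∂((poissonMeasure (r n)).prod (poissonMeasure (r n)))) atTop
      (nhds ((1 - 2 * (θ * Complex.I)) ^ (-(1 / 2 : ℂ)))) := by
  have hr' : Tendsto (fun n => 2 * (r n : ℝ)) atTop atTop :=
    (NNReal.tendsto_coe_atTop.2 hr).const_mul_atTop (by norm_num)
  let ν : ℕ → ProbabilityMeasure ℝ := fun n =>
    ⟨((poissonMeasure (r n)).prod (poissonMeasure (r n))).map (lrtX (r n)), lrt_prob _⟩
  let ν₀ : ProbabilityMeasure ℝ := ⟨gaussianReal 0 1, inferInstance⟩
  have hν : Tendsto ν atTop (nhds ν₀) := by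
    apply ProbabilityMeasure.tendsto_of_tendsto_charFun
    intro x
    have h1 : charFun (ν₀ : Measure ℝ) x = ((Real.exp (-(x ^ 2) / 2) : ℝ) : ℂ) := by
      change charFun (gaussianReal 0 1) x = _
      rw [charFun_gaussianReal]
      push_cast
      congr 1
      simp
      ring
    rw [h1]
    have h2 : ∀ n, charFun (ν n : Measure ℝ) x = _ := fun n => lrt_charFun_X (r n) x
    simp_rw [h2]
    exact (Complex.continuous_ofReal.tendsto _).comp
      ((Real.continuous_exp.tendsto _).comp ((lrt_cos_limit x).comp hr'))
  rw [ProbabilityMeasure.tendsto_iff_forall_integral_rclike_tendsto ℂ] at hν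
  let f : BoundedContinuousFunction ℝ ℂ := BoundedContinuousFunction.ofNormedAddCommGroup
    (fun x : ℝ => Complex.exp ((θ * x ^ 2 : ℝ) * Complex.I)) (by fun_prop) 1
    (fun x => by rw [Complex.norm_exp_ofReal_mul_I])
  have h := hν f
  rw [← lrt_gauss_sq]
  refine h.congr fun n => ?_
  change ∫ x, Complex.exp ((θ * x ^ 2 : ℝ) * Complex.I)
    ∂(((poissonMeasure (r n)).prod (poissonMeasure (r n))).map (lrtX (r n))) = _
  rw [integral_map .of_discrete (by fun_prop)]
  congr 1
  ext p
  rw [lrtX, mul_pow, inv_pow, Real.sq_sqrt (by positivity)]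
  congr 4
  ring

lemma lrt_diff_bound (r : NNReal) (a θ : ℝ) (hr : 0 < r) (ha0 : 0 < a) (ha : a ≤ r / 4) :
    ‖(∫ p, Complex.exp ((θ * lrtG p : ℝ) * Complex.I) ∂((poissonMeasure r).prod (poissonMeasure r)))
      - ∫ p, Complex.exp ((θ * (((p.1 : ℝ) - p.2) ^ 2 / (2 * r)) : ℝ) * Complex.I)
        ∂((poissonMeasure r).prod (poissonMeasure r))‖
    ≤ |θ| * (80 * a ^ 4 / r ^ 3 + 4 * a ^ 3 / r ^ 2) + 2 / a ^ 2 * (2 * r) := by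
  set Q := (poissonMeasure r).prod (poissonMeasure r)
  have hI : ∀ g : ℕ × ℕ → ℝ, Integrable (fun p => Complex.exp ((g p : ℝ) * Complex.I)) Q := by
    intro g
    refine Integrable.of_bound (C := 1) .of_discrete (ae_of_all _ fun p => ?_)
    rw [Complex.norm_exp_ofReal_mul_I]
  have i1 : Integrable (fun p : ℕ × ℕ => ((p.1 : ℝ) - r) ^ 2) Q :=
    (lrt_integrable_var r).comp_fst _
  have i2 : Integrable (fun p : ℕ × ℕ => ((p.2 : ℝ) - r) ^ 2) Q :=
    (lrt_integrable_var r).comp_snd _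
  rw [← integral_sub (hI fun p => θ * lrtG p) (hI fun p => θ * (((p.1 : ℝ) - p.2) ^ 2 / (2 * r)))]
  refine (norm_integral_le_of_norm_le (((integrable_const _).add ((i1.add i2).const_mul _)))
    (ae_of_all _ fun p => lrt_pointwise θ p r a (by exact_mod_cast hr) ha0 ha)).trans ?_
  have e1 : ∫ p : ℕ × ℕ, ((p.1 : ℝ) - r) ^ 2 ∂Q = r := by
    rw [integral_fun_fst (μ := poissonMeasure r) (ν := poissonMeasure r) (fun n : ℕ => ((n : ℝ) - r) ^ 2),
      lrt_integral_var]
    simp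
  have e2 : ∫ p : ℕ × ℕ, ((p.2 : ℝ) - r) ^ 2 ∂Q = r := by
    rw [integral_fun_snd (μ := poissonMeasure r) (ν := poissonMeasure r) (fun n : ℕ => ((n : ℝ) - r) ^ 2),
      lrt_integral_var]
    simp
  simp only [Pi.add_apply]
  have i3 : Integrable (fun p : ℕ × ℕ => 2 / a ^ 2 * (((p.1 : ℝ) - r) ^ 2 + ((p.2 : ℝ) - r) ^ 2)) Q :=
    (i1.add i2).const_mul _
  rw [integral_add (integrable_const _) i3, integral_const, integral_const_mul, integral_add i1 i2, e1, e2]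
  simp
  linarith

lemma lrt_tendsto_pair (r : ℕ → NNReal) (hr : Tendsto r atTop atTop) (θ : ℝ) :
    Tendsto (fun n => ∫ p, Complex.exp ((θ * lrtG p : ℝ) * Complex.I)
        ∂((poissonMeasure (r n)).prod (poissonMeasure (r n)))) atTop
      (nhds ((1 - 2 * (θ * Complex.I)) ^ (-(1 / 2 : ℂ)))) := by
  have hX := lrt_tendsto_X r hr θ
  have hr' : Tendsto (fun n => (r n : ℝ)) atTop atTop := NNReal.tendsto_coe_atTop.2 hr
  let s : ℕ → ℝ := fun n => (r n : ℝ) ^ (1 / 8 : ℝ)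
  have hs : Tendsto s atTop atTop := (tendsto_rpow_atTop (by norm_num)).comp hr'
  have hs8 : ∀ n, (r n : ℝ) = s n ^ 8 := by
    intro n
    change _ = ((r n : ℝ) ^ (1 / 8 : ℝ)) ^ 8
    rw [← Real.rpow_natCast, ← Real.rpow_mul (by positivity)]
    norm_num
  have hinv : ∀ k : ℕ, k ≠ 0 → Tendsto (fun n => (s n ^ k)⁻¹) atTop (nhds 0) := fun k hk =>
    tendsto_inv_atTop_zero.comp ((tendsto_pow_atTop hk).comp hs)
  have hlim : Tendsto (fun n => |θ| * (80 * (s n ^ 4)⁻¹ + 4 * (s n ^ 1)⁻¹) + 4 * (s n ^ 2)⁻¹)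
      atTop (nhds 0) := by
    have := ((((hinv 4 (by norm_num)).const_mul 80).add
      ((hinv 1 (by norm_num)).const_mul 4)).const_mul |θ|).add ((hinv 2 (by norm_num)).const_mul 4)
    simpa using this
  have hd := squeeze_zero_norm' (a := fun n => |θ| * (80 * (s n ^ 4)⁻¹ + 4 * (s n ^ 1)⁻¹)
    + 4 * (s n ^ 2)⁻¹) (f := fun n =>
    (∫ p, Complex.exp ((θ * lrtG p : ℝ) * Complex.I)
        ∂((poissonMeasure (r n)).prod (poissonMeasure (r n)))) -
    ∫ p, Complex.exp ((θ * (((p.1 : ℝ) - p.2) ^ 2 / (2 * r n)) : ℝ) * Complex.I)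
        ∂((poissonMeasure (r n)).prod (poissonMeasure (r n)))) (t₀ := atTop) ?_ hlim
  · simpa using hd.add hX
  · filter_upwards [hs.eventually_ge_atTop 2] with n hn
    have hsp : 0 < s n := by linarith
    have hrp : 0 < r n := by
      have : (0 : ℝ) < r n := by rw [hs8]; positivity
      exact_mod_cast this
    have h4 : s n ^ 5 ≤ r n / 4 := by
      rw [hs8]
      have h3 : (2 : ℝ) ^ 3 ≤ s n ^ 3 := pow_le_pow_left₀ (by norm_num) hn 3
      have : s n ^ 8 = s n ^ 5 * s n ^ 3 := by ring
      have h5 : 0 < s n ^ 5 := by positivity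
      rw [this]
      nlinarith
    refine (lrt_diff_bound (r n) (s n ^ 5) θ hrp (by positivity) h4).trans (le_of_eq ?_)
    rw [hs8]
    field_simp
    ring

lemma lrt_pair_bij (P : ℕ) : Function.Bijective (Sum.elim (pairL P) (pairR P)) := by
  constructor
  · rintro (i | i) (j | j) h
    · simp only [Sum.elim_inl, pairL, Fin.mk.injEq] at h
      congr 1; ext; omega
    · simp only [Sum.elim_inl, Sum.elim_inr, pairL, pairR, Fin.mk.injEq] at h
      omega
    · simp only [Sum.elim_inl, Sum.elim_inr, pairL, pairR, Fin.mk.injEq] at h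
      omega
    · simp only [Sum.elim_inr, pairR, Fin.mk.injEq] at h
      congr 1; ext; omega
  · intro j
    rcases Nat.even_or_odd' j.1 with ⟨c, hc | hc⟩
    · exact ⟨Sum.inl ⟨c, by have := j.2; omega⟩, by ext; simp [pairL, hc]⟩
    · exact ⟨Sum.inr ⟨c, by have := j.2; omega⟩, by ext; simp [pairR, hc]⟩

lemma lrt_map_pi (P : ℕ) (lam : Fin P → NNReal) :
    Measure.map (fun (y : Fin (2 * P) → ℕ) (i : Fin P) => (y (pairL P i), y (pairR P i)))
      (Measure.pi fun j : Fin (2 * P) => poissonMeasure (lam (pairIdx P j)))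
    = Measure.pi fun i : Fin P => (poissonMeasure (lam i)).prod (poissonMeasure (lam i)) := by
  apply Measure.ext_of_singleton
  intro z
  rw [Measure.map_apply .of_discrete .of_discrete, Measure.pi_singleton]
  let e := Equiv.ofBijective _ (lrt_pair_bij P)
  let y₀ : Fin (2 * P) → ℕ := fun j => Sum.elim (fun i => (z i).1) (fun i => (z i).2) (e.symm j)
  have hL : ∀ i, y₀ (pairL P i) = (z i).1 := by
    intro i
    have : e (Sum.inl i) = pairL P i := rfl
    simp only [y₀, ← this, Equiv.symm_apply_apply, Sum.elim_inl]
  have hR : ∀ i, y₀ (pairR P i) = (z i).2 := by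
    intro i
    have : e (Sum.inr i) = pairR P i := rfl
    simp only [y₀, ← this, Equiv.symm_apply_apply, Sum.elim_inr]
  have hpre : (fun (y : Fin (2 * P) → ℕ) (i : Fin P) => (y (pairL P i), y (pairR P i))) ⁻¹' {z}
      = {y₀} := by
    ext y
    simp only [Set.mem_preimage, Set.mem_singleton_iff]
    constructor
    · intro h
      ext j
      obtain ⟨k, rfl⟩ := e.surjective j
      rcases k with i | i
      · change y (pairL P i) = y₀ (pairL P i)
        rw [hL, ← h]
      · change y (pairR P i) = y₀ (pairR P i)
        rw [hR, ← h]
    · rintro rfl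
      ext i
      · exact hL i
      · exact hR i
  rw [hpre, Measure.pi_singleton, ← e.prod_comp, Fintype.prod_sum_type, ← Finset.prod_mul_distrib]
  refine Finset.prod_congr rfl fun i _ => ?_
  have i1 : pairIdx P (pairL P i) = i := by ext; simp [pairIdx, pairL]
  have i2 : pairIdx P (pairR P i) = i := by ext; simp [pairIdx, pairR]; omega
  change poissonMeasure (lam (pairIdx P (pairL P i))) {y₀ (pairL P i)} *
    poissonMeasure (lam (pairIdx P (pairR P i))) {y₀ (pairR P i)} = _
  rw [i1, i2, hL, hR, ← Measure.prod_prod, Set.singleton_prod_singleton]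

/-- Asymptotic null distribution of the likelihood ratio statistic for pairwise equality
of Poisson means: if `Y_{2i−1}(t), Y_{2i}(t)`, `1 ≤ i ≤ P`, are independent with
`Y_{2i−1}(t), Y_{2i}(t) ~ Poisson(μᵢ t)`, and
`R(t) = 2[∑ᵢ Y_{2i−1}(t) log(2Y_{2i−1}(t)/(Y_{2i−1}(t)+Y_{2i}(t))) + ∑ᵢ Y_{2i}(t) log(2Y_{2i}(t)/(Y_{2i−1}(t)+Y_{2i}(t)))]`
(a pair with `Y_{2i−1}(t)+Y_{2i}(t) = 0` contributing `0`, and `0·log 0 = 0`), then as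
`t → ∞` the law of `R(t)` converges weakly to the chi-squared distribution with `P`
degrees of freedom, i.e. the gamma distribution with shape `P/2` and rate `1/2`. Weak
convergence is expressed via integrals of bounded continuous test functions. -/
theorem lrt_pairwise_statistic_tendsto_chiSq
    (P : ℕ) (hP : 1 ≤ P)
    (μ : Fin P → NNReal) (hμ : ∀ i, 0 < μ i)
    (ρ : (Fin (2 * P) → ℕ) → ℝ)
    (hρ : ∀ y : Fin (2 * P) → ℕ, ρ y =
      2 * ∑ i : Fin P,
        (if y (pairL P i) + y (pairR P i) = 0 then 0
         else
          (y (pairL P i) : ℝ) *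
              Real.log (2 * (y (pairL P i) : ℝ) / ((y (pairL P i) : ℝ) + (y (pairR P i) : ℝ))) +
            (y (pairR P i) : ℝ) *
              Real.log (2 * (y (pairR P i) : ℝ) / ((y (pairL P i) : ℝ) + (y (pairR P i) : ℝ)))))
    (law : NNReal → Measure ℝ)
    (hlaw : ∀ t : NNReal, law t =
      Measure.map ρ (Measure.pi fun j : Fin (2 * P) => poissonMeasure (μ (pairIdx P j) * t)))
    (chiSq : Measure ℝ)
    (hchi : chiSq = gammaMeasure ((P : ℝ) / 2) (1 / 2)) :
    ∀ f : BoundedContinuousFunction ℝ ℝ,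
      Tendsto (fun t : NNReal => ∫ x, f x ∂(law t)) atTop (nhds (∫ x, f x ∂chiSq)) := by
  have hcf : ∀ (t : NNReal) (θ : ℝ), charFun (law t) θ =
      ∏ i : Fin P, ∫ p, Complex.exp ((θ * lrtG p : ℝ) * Complex.I)
        ∂((poissonMeasure (μ i * t)).prod (poissonMeasure (μ i * t))) := by
    intro t θ
    rw [charFun_apply_real, hlaw, integral_map .of_discrete (by fun_prop),
      ← integral_fintype_prod_eq_prod, ← lrt_map_pi P (fun i => μ i * t),
      integral_map .of_discrete .of_discrete]
    congr 1
    ext y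
    rw [← Complex.exp_sum, hρ, ← Finset.sum_mul]
    congr 1
    rw [Finset.mul_sum, ← Complex.ofReal_sum, ← Complex.ofReal_mul, Finset.mul_sum]
    rfl
  have hPr : 0 < (P : ℝ) / 2 := by
    have : (1 : ℝ) ≤ P := by exact_mod_cast hP
    linarith
  have hlawP : ∀ t, IsProbabilityMeasure (law t) := by
    intro t
    rw [hlaw]
    exact Measure.isProbabilityMeasure_map .of_discrete
  have hchiP : IsProbabilityMeasure chiSq := by
    rw [hchi]
    exact isProbabilityMeasure_gammaMeasure hPr (by norm_num)
  intro f
  rw [tendsto_iff_seq_tendsto]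
  intro t ht
  let ν : ℕ → ProbabilityMeasure ℝ := fun n => ⟨law (t n), hlawP _⟩
  let ν₀ : ProbabilityMeasure ℝ := ⟨chiSq, hchiP⟩
  have hν : Tendsto ν atTop (nhds ν₀) := by
    apply ProbabilityMeasure.tendsto_of_tendsto_charFun
    intro θ
    have h0 : charFun (ν₀ : Measure ℝ) θ
        = ∏ _i : Fin P, (1 - 2 * (θ * Complex.I)) ^ (-(1 / 2 : ℂ)) := by
      change charFun chiSq θ = _
      rw [hchi, lrt_charFun_gamma _ hPr, Finset.prod_const, Finset.card_univ, Fintype.card_fin,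
        ← Complex.cpow_nat_mul]
      congr 1
      push_cast
      ring
    have h1 : ∀ n, charFun (ν n : Measure ℝ) θ = _ := fun n => hcf (t n) θ
    rw [h0]
    simp_rw [h1]
    refine tendsto_finsetProd _ fun i _ => lrt_tendsto_pair (fun n => μ i * t n) ?_ θ
    exact ht.const_mul_atTop (hμ i)
  exact (ProbabilityMeasure.tendsto_iff_forall_integral_tendsto.1 hν) f
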